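/- arXiv:1311.1723 — 2 statements merged into one kernel-verified Lean document; each statement's English description precedes it below -/
import Mathlib

section
/- Consider a realization of Algorithm RFD on x^n whose rescale partition is {[1,n]}. Let c(x) denote the number of occurrences of symbol x in x^n, let M be the number of distinct symbols occurring in x^n, let t0 = Σ_{y∈X} s0(y), and let s0 be a positive real with s0 ≤ s0(x) for all x ∈ X. Then ℓ(x^n; RFD) ≤ log₂ (n choose c(1),…,c(N)) + (M − 1 + (t0 − s0)/d)·log₂ n + log₂( (t0/d)·e^{t0/d} / ((s0/d)^M · M^{M − s0/d}) ). -/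
open Finset

/-- One call to `Update`: if the total would exceed `T`, rescale first
(replace each count `s i` by `max 1 ⌊cf * s i⌋`), then add `d` to the count of `x`. -/
noncomputable def RFDupdate {N : ℕ} (cf : ℝ) (d T : ℕ) (s : Fin N → ℕ) (x : Fin N) : Fin N → ℕ :=
  let s' : Fin N → ℕ :=
    if T < (∑ i, s i) + d then (fun i => max 1 ⌊cf * (s i : ℝ)⌋₊) else s
  fun i => if i = x then s' i + d else s' i

/-- State (counts) of Algorithm RFD after `k` update steps on the input sequence `xs`
(0-indexed: the `k`-th step processes symbol `xs (k-1)`). -/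
noncomputable def RFDcounts {N : ℕ} (cf : ℝ) (d T : ℕ) (s0 : Fin N → ℕ) (xs : ℕ → Fin N) : ℕ → Fin N → ℕ
  | 0 => s0
  | k + 1 => RFDupdate cf d T (RFDcounts cf d T s0 xs k) (xs k)

/-- Total counter `t` after `k` update steps. -/
noncomputable def RFDtotal {N : ℕ} (cf : ℝ) (d T : ℕ) (s0 : Fin N → ℕ) (xs : ℕ → Fin N) (k : ℕ) : ℕ :=
  ∑ i, RFDcounts cf d T s0 xs k i

/-- A rescale takes place in step `k ≥ 1` iff at the beginning of step `k`
the total plus `d` exceeds `T`. -/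
def RFDrescaleAt {N : ℕ} (cf : ℝ) (d T : ℕ) (s0 : Fin N → ℕ) (xs : ℕ → Fin N) (k : ℕ) : Prop :=
  1 ≤ k ∧ T < RFDtotal cf d T s0 xs (k - 1) + d

/-- `P` is a partition of the integer interval `[a,b]` into consecutive closed intervals,
listed in order; an interval `[i,j]` is represented by the pair `(i,j)`. -/
def ConsecPartition (a b : ℕ) (P : List (ℕ × ℕ)) : Prop :=
  P ≠ [] ∧ P.head?.map Prod.fst = some a ∧ P.getLast?.map Prod.snd = some b ∧
    (∀ p ∈ P, p.1 ≤ p.2) ∧ P.Chain' (fun p q => q.1 = p.2 + 1)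

/-- `P` is the rescale partition of `[a,b]`: a partition into consecutive intervals `[i,j]`
such that no rescale occurs at steps `i,…,j-1`, and a rescale occurs at step `j` whenever
`j < b` (for the last interval, a rescale at its last step is optional). -/
def RFDrescalePartition {N : ℕ} (cf : ℝ) (d T : ℕ) (s0 : Fin N → ℕ) (xs : ℕ → Fin N)
    (a b : ℕ) (P : List (ℕ × ℕ)) : Prop :=
  ConsecPartition a b P ∧
    (∀ p ∈ P, ∀ k, p.1 ≤ k → k < p.2 → ¬ RFDrescaleAt cf d T s0 xs k) ∧
    (∀ p ∈ P, p.2 < b → RFDrescaleAt cf d T s0 xs p.2)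

/-- The probability `RFD(x; x^k)` that Algorithm RFD assigns to symbol `x` after `k` steps. -/
noncomputable def RFDprob {N : ℕ} (cf : ℝ) (d T : ℕ) (s0 : Fin N → ℕ) (xs : ℕ → Fin N)
    (k : ℕ) (x : Fin N) : ℝ :=
  (RFDcounts cf d T s0 xs k x : ℝ) / (RFDtotal cf d T s0 xs k : ℝ)

/-- Ideal code length (in bits) of Algorithm RFD on steps `a,…,b` (1-indexed steps;
step `k` encodes symbol `xs (k-1)` using the prediction after `k-1` steps). -/
noncomputable def RFDcodeLen {N : ℕ} (cf : ℝ) (d T : ℕ) (s0 : Fin N → ℕ) (xs : ℕ → Fin N)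
    (a b : ℕ) : ℝ :=
  -∑ k ∈ Finset.Icc a b, Real.logb 2 (RFDprob cf d T s0 xs (k - 1) (xs (k - 1)))

/-- Ideal code length (in bits) of a fixed distribution `p` on steps `a,…,b`. -/
noncomputable def distCodeLen {N : ℕ} (p : Fin N → ℝ) (xs : ℕ → Fin N) (a b : ℕ) : ℝ :=
  -∑ k ∈ Finset.Icc a b, Real.logb 2 (p (xs (k - 1)))

/-!
Without a rescale the probabilities multiply to a quotient of rising factorials, so that with
`t = t0 / d` and `s = s0 / d` the code length is at most `log₂ ((t)_n / ∏ x, (s)_{c x})`, the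
product running over the `M` symbols that occur. Put `G_s(m) = ∏_{k ≤ m} (1 + s / k)`; then
`(s)_m / m! = (s / m) G_s(m - 1)`, and after division by the multinomial coefficient it remains to
compare `G_t(n - 1) ∏ x, c x` with `∏ x, G_s(c x - 1)`. The product of the `c x` is at most
`(n / M)^M` by AM-GM. Trading the parameter `t` for `s` costs a factor
`G_{t-s}(n - 1) ≤ e^(t-s) n^(t-s)`. Finally `G_s` is submultiplicative in its argument, and since
`n - 1 = ∑ x, (c x - 1) + (M - 1)`, splitting `G_s(n - 1)` along the symbols leaves only the factor
`G_s(M - 1) ≤ e^s M^s`.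
-/

/-- The product `∏_{k=1}^{m} (1 + s / k)`, that is, the rising factorial `(s + 1)_m` divided by
`m!`. It carries the growth `m ^ s` of `(s)_{m + 1} / m!`; the index is shifted so that the product
runs over `range m`. -/
noncomputable def prodOneAddDiv (s : ℝ) (m : ℕ) : ℝ :=
  ∏ k ∈ range m, (1 + s / ((k : ℝ) + 1))

section ProdOneAddDiv

variable {s t : ℝ}

theorem prodOneAddDiv_pos (hs : 0 ≤ s) (m : ℕ) : 0 < prodOneAddDiv s m :=
  prod_pos fun _ _ => by positivity

theorem prodOneAddDiv_add_left_le (hs : 0 ≤ s) (ht : 0 ≤ t) (m : ℕ) :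
    prodOneAddDiv (s + t) m ≤ prodOneAddDiv s m * prodOneAddDiv t m := by
  unfold prodOneAddDiv
  rw [← prod_mul_distrib]
  refine prod_le_prod (fun _ _ => by positivity) fun k _ => ?_
  have hcross : 0 ≤ s / ((k : ℝ) + 1) * (t / ((k : ℝ) + 1)) := by positivity
  rw [add_div]
  linarith

theorem prodOneAddDiv_add_right_le (hs : 0 ≤ s) (m p : ℕ) :
    prodOneAddDiv s (m + p) ≤ prodOneAddDiv s m * prodOneAddDiv s p := by
  unfold prodOneAddDiv
  rw [prod_range_add]
  refine mul_le_mul_of_nonneg_left ?_ (prodOneAddDiv_pos hs m).le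
  refine prod_le_prod (fun _ _ => by positivity) fun k _ => ?_
  gcongr
  exact Nat.le_add_left k m

theorem prodOneAddDiv_sum_le {ι : Type*} (hs : 0 ≤ s) (S : Finset ι) (f : ι → ℕ) :
    prodOneAddDiv s (∑ x ∈ S, f x) ≤ ∏ x ∈ S, prodOneAddDiv s (f x) := by
  classical
  induction S using Finset.induction_on with
  | empty => simp [prodOneAddDiv]
  | insert a S ha ih =>
    rw [sum_insert ha, prod_insert ha]
    exact (prodOneAddDiv_add_right_le hs _ _).trans
      (mul_le_mul_of_nonneg_left ih (prodOneAddDiv_pos hs _).le)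

theorem prodOneAddDiv_le_exp_mul_rpow (hs : 0 ≤ s) (m : ℕ) :
    prodOneAddDiv s m ≤ Real.exp s * ((m : ℝ) + 1) ^ s := by
  have hharm : ∑ k ∈ range m, ((k : ℝ) + 1)⁻¹ ≤ 1 + Real.log ((m : ℝ) + 1) :=
    calc ∑ k ∈ range m, ((k : ℝ) + 1)⁻¹
        ≤ ∑ k ∈ range (m + 1), ((k : ℝ) + 1)⁻¹ := by
          rw [sum_range_succ]
          exact le_add_of_nonneg_right (by positivity)
      _ ≤ 1 + Real.log ((m : ℝ) + 1) := by simpa [harmonic] using harmonic_le_one_add_log (m + 1)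
  calc prodOneAddDiv s m
      ≤ ∏ k ∈ range m, Real.exp (s * ((k : ℝ) + 1)⁻¹) :=
        prod_le_prod (fun _ _ => by positivity) fun k _ => by
          rw [add_comm, div_eq_mul_inv]
          exact Real.add_one_le_exp _
    _ = Real.exp (s * ∑ k ∈ range m, ((k : ℝ) + 1)⁻¹) := by rw [← Real.exp_sum, mul_sum]
    _ ≤ Real.exp (s * (1 + Real.log ((m : ℝ) + 1))) := by gcongr
    _ = Real.exp s * ((m : ℝ) + 1) ^ s := by
        rw [Real.rpow_def_of_pos (by positivity), ← Real.exp_add]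
        ring_nf

theorem prodOneAddDiv_sum_sub_one_le {ι : Type*} (hs : 0 ≤ s) {S : Finset ι} (hS : S.Nonempty)
    {c : ι → ℕ} (hc : ∀ x ∈ S, c x ≠ 0) :
    prodOneAddDiv s (∑ x ∈ S, c x - 1) ≤
      (∏ x ∈ S, prodOneAddDiv s (c x - 1)) * (Real.exp s * (#S : ℝ) ^ s) := by
  have hcard := hS.card_pos
  have hsplit : ∑ x ∈ S, c x - 1 = ∑ x ∈ S, (c x - 1) + (#S - 1) := by
    have hone : ∀ x ∈ S, 1 ≤ c x := fun x hx => Nat.one_le_iff_ne_zero.2 (hc x hx)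
    have hle : #S ≤ ∑ x ∈ S, c x := by simpa using sum_le_sum hone
    rw [sum_tsub_distrib S hone, ← card_eq_sum_ones]
    omega
  have hlast := prodOneAddDiv_le_exp_mul_rpow hs (#S - 1)
  rw [Nat.cast_pred hcard, sub_add_cancel] at hlast
  rw [hsplit]
  exact (prodOneAddDiv_add_right_le hs _ _).trans <|
    mul_le_mul (prodOneAddDiv_sum_le hs S _) hlast (prodOneAddDiv_pos hs _).le
      (prod_nonneg fun _ _ => (prodOneAddDiv_pos hs _).le)

end ProdOneAddDiv

theorem prod_le_sum_div_card_pow {ι : Type*} (S : Finset ι) {z : ι → ℝ} (hz : ∀ x ∈ S, 0 ≤ z x) :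
    ∏ x ∈ S, z x ≤ ((∑ x ∈ S, z x) / #S) ^ #S := by
  obtain rfl | hS := S.eq_empty_or_nonempty
  · simp
  have hmean : (∏ x ∈ S, z x) ^ (#S : ℝ)⁻¹ ≤ (∑ x ∈ S, z x) / #S := by
    simpa using Real.geom_mean_le_arith_mean S (fun _ => 1) z (fun _ _ => zero_le_one)
      (by simpa using hS) hz
  rw [← Real.rpow_inv_natCast_pow (prod_nonneg hz) hS.card_pos.ne']
  exact pow_le_pow_left₀ (Real.rpow_nonneg (prod_nonneg hz) _) hmean _

section RisingFactorial

theorem ascPochhammer_eval_eq_prod_range {R : Type*} [CommSemiring R] (n : ℕ) (r : R) :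
    (ascPochhammer R n).eval r = ∏ k ∈ range n, (r + k) := by
  induction n with
  | zero => simp
  | succ n ih => rw [ascPochhammer_succ_eval, prod_range_succ, ih]

theorem ascPochhammer_eval_le_eval {R : Type*} [CommSemiring R] [PartialOrder R] [IsOrderedRing R]
    {r r' : R} (hr : 0 ≤ r) (hrr' : r ≤ r') (n : ℕ) :
    (ascPochhammer R n).eval r ≤ (ascPochhammer R n).eval r' := by
  simp only [ascPochhammer_eval_eq_prod_range]
  exact prod_le_prod (fun _ _ => add_nonneg hr (Nat.cast_nonneg _)) fun _ _ => by gcongr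

theorem ascPochhammer_eval_div_factorial {n : ℕ} (hn : n ≠ 0) (s : ℝ) :
    (ascPochhammer ℝ n).eval s / n.factorial = s / n * prodOneAddDiv s (n - 1) := by
  obtain ⟨m, rfl⟩ := Nat.exists_eq_succ_of_ne_zero hn
  simp only [Nat.succ_eq_add_one, Nat.add_sub_cancel]
  induction m with
  | zero => simp [prodOneAddDiv]
  | succ m ih =>
    have hstep : prodOneAddDiv s (m + 1) = prodOneAddDiv s m * (1 + s / ((m : ℝ) + 1)) :=
      prod_range_succ _ _
    have ih := ih m.succ_ne_zero
    rw [ascPochhammer_succ_eval, Nat.factorial_succ, hstep]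
    push_cast at ih ⊢
    rw [mul_comm ((m : ℝ) + 1 + 1), mul_div_mul_comm, ih]
    field_simp
    ring

variable {ι : Type*} {S : Finset ι} {c : ι → ℕ} {n : ℕ} {s t : ℝ}

theorem le_prod_ascPochhammer_eval_div_factorial (hc : ∀ x ∈ S, c x ≠ 0)
    (hn : ∑ x ∈ S, c x = n) (hs : 0 ≤ s) :
    s ^ #S / ((n : ℝ) / #S) ^ #S * ∏ x ∈ S, prodOneAddDiv s (c x - 1) ≤
      ∏ x ∈ S, (ascPochhammer ℝ (c x)).eval s / (c x).factorial := by
  have hamgm : ∏ x ∈ S, (c x : ℝ) ≤ ((n : ℝ) / #S) ^ #S := by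
    simpa [← hn] using prod_le_sum_div_card_pow S fun x _ => (c x).cast_nonneg (α := ℝ)
  have hpos : 0 < ∏ x ∈ S, (c x : ℝ) :=
    prod_pos fun x hx => Nat.cast_pos.2 (Nat.pos_of_ne_zero (hc x hx))
  rw [prod_congr rfl fun x hx => ascPochhammer_eval_div_factorial (hc x hx) s, prod_mul_distrib,
    prod_div_distrib, prod_const]
  have hG := prod_nonneg fun x (_ : x ∈ S) => (prodOneAddDiv_pos hs (c x - 1)).le
  gcongr

theorem ascPochhammer_eval_div_factorial_le (hS : S.Nonempty) (hc : ∀ x ∈ S, c x ≠ 0)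
    (hn : ∑ x ∈ S, c x = n) (hs : 0 < s) (hst : s ≤ t) :
    (ascPochhammer ℝ n).eval t / n.factorial ≤
      (n : ℝ) ^ ((#S : ℝ) - 1 + (t - s)) *
        (t * Real.exp t / (s ^ #S * (#S : ℝ) ^ ((#S : ℝ) - s))) *
        ∏ x ∈ S, (ascPochhammer ℝ (c x)).eval s / (c x).factorial := by
  have ht : 0 < t := hs.trans_le hst
  have hts : 0 ≤ t - s := sub_nonneg.2 hst
  have hM : (0 : ℝ) < #S := Nat.cast_pos.2 hS.card_pos
  have hn0 : 0 < n := hn ▸ sum_pos (fun x hx => Nat.pos_of_ne_zero (hc x hx)) hS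
  have hn0' : (0 : ℝ) < n := Nat.cast_pos.2 hn0
  set P := ∏ x ∈ S, prodOneAddDiv s (c x - 1)
  have hsplit : prodOneAddDiv s (n - 1) ≤ P * (Real.exp s * (#S : ℝ) ^ s) :=
    hn ▸ prodOneAddDiv_sum_sub_one_le hs.le hS hc
  have hgap : prodOneAddDiv (t - s) (n - 1) ≤ Real.exp (t - s) * (n : ℝ) ^ (t - s) := by
    simpa [Nat.cast_pred hn0] using prodOneAddDiv_le_exp_mul_rpow hts (n - 1)
  calc (ascPochhammer ℝ n).eval t / n.factorial
      = t / n * prodOneAddDiv (s + (t - s)) (n - 1) := by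
        rw [ascPochhammer_eval_div_factorial hn0.ne', add_sub_cancel]
    _ ≤ t / n * (prodOneAddDiv s (n - 1) * prodOneAddDiv (t - s) (n - 1)) := by
        gcongr
        exact prodOneAddDiv_add_left_le hs.le hts _
    _ ≤ t / n * (P * (Real.exp s * (#S : ℝ) ^ s) * (Real.exp (t - s) * (n : ℝ) ^ (t - s))) := by
        have := (prodOneAddDiv_pos hts (n - 1)).le
        have := (prodOneAddDiv_pos hs.le (n - 1)).le.trans hsplit
        gcongr
    _ = (n : ℝ) ^ ((#S : ℝ) - 1 + (t - s)) *
          (t * Real.exp t / (s ^ #S * (#S : ℝ) ^ ((#S : ℝ) - s))) *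
          (s ^ #S / ((n : ℝ) / #S) ^ #S * P) := by
        rw [Real.rpow_add hn0', Real.rpow_sub_one hn0'.ne', Real.rpow_natCast, Real.rpow_sub hM,
          Real.rpow_natCast, Real.exp_sub, div_pow]
        field_simp
    _ ≤ _ := by
        gcongr
        exact le_prod_ascPochhammer_eval_div_factorial hc hn hs.le

theorem ascPochhammer_eval_div_prod_le (hS : S.Nonempty) (hc : ∀ x ∈ S, c x ≠ 0)
    (hn : ∑ x ∈ S, c x = n) (hs : 0 < s) (hst : s ≤ t) {a : ι → ℝ} (ha : ∀ x ∈ S, s ≤ a x) :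
    (ascPochhammer ℝ n).eval t / ∏ x ∈ S, (ascPochhammer ℝ (c x)).eval (a x) ≤
      (Nat.multinomial S c : ℝ) * (n : ℝ) ^ ((#S : ℝ) - 1 + (t - s)) *
        (t * Real.exp t / (s ^ #S * (#S : ℝ) ^ ((#S : ℝ) - s))) := by
  have hmult : (∏ x ∈ S, ((c x).factorial : ℝ)) * Nat.multinomial S c = n.factorial := by
    exact_mod_cast hn ▸ Nat.multinomial_spec S c
  have hfac : 0 < ∏ x ∈ S, ((c x).factorial : ℝ) := prod_pos fun _ _ => by positivity
  have hprod : 0 < ∏ x ∈ S, (ascPochhammer ℝ (c x)).eval s :=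
    prod_pos fun x _ => ascPochhammer_pos _ _ hs
  have hmono : ∏ x ∈ S, (ascPochhammer ℝ (c x)).eval s ≤
      ∏ x ∈ S, (ascPochhammer ℝ (c x)).eval (a x) :=
    prod_le_prod (fun x _ => (ascPochhammer_pos _ _ hs).le)
      fun x hx => ascPochhammer_eval_le_eval hs.le (ha x hx) _
  have hbound := ascPochhammer_eval_div_factorial_le hS hc hn hs hst
  have hmult_pos : (0 : ℝ) < Nat.multinomial S c := Nat.cast_pos.2 (Nat.multinomial_pos S c)
  rw [prod_div_distrib, ← hmult, div_le_iff₀ (mul_pos hfac hmult_pos)] at hbound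
  calc _ ≤ (ascPochhammer ℝ n).eval t / ∏ x ∈ S, (ascPochhammer ℝ (c x)).eval s := by
        have := (ascPochhammer_pos n t (hs.trans_le hst)).le
        gcongr
    _ ≤ _ := by
        rw [div_le_iff₀ hprod]
        refine hbound.trans_eq ?_
        field_simp

theorem logb_ascPochhammer_eval_div_prod_le {b : ℝ} (hb : 1 < b) (hS : S.Nonempty)
    (hc : ∀ x ∈ S, c x ≠ 0) (hn : ∑ x ∈ S, c x = n) (hs : 0 < s) (hst : s ≤ t) {a : ι → ℝ}
    (ha : ∀ x ∈ S, s ≤ a x) :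
    Real.logb b
        ((ascPochhammer ℝ n).eval t / ∏ x ∈ S, (ascPochhammer ℝ (c x)).eval (a x)) ≤
      Real.logb b (Nat.multinomial S c) + ((#S : ℝ) - 1 + (t - s)) * Real.logb b n +
        Real.logb b (t * Real.exp t / (s ^ #S * (#S : ℝ) ^ ((#S : ℝ) - s))) := by
  have ht : 0 < t := hs.trans_le hst
  have hn_pos : (0 : ℝ) < n :=
    Nat.cast_pos.2 (hn ▸ sum_pos (fun x hx => Nat.pos_of_ne_zero (hc x hx)) hS)
  have hmult_pos : (0 : ℝ) < Nat.multinomial S c := Nat.cast_pos.2 (Nat.multinomial_pos S c)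
  have hratio_pos : 0 < (ascPochhammer ℝ n).eval t /
      ∏ x ∈ S, (ascPochhammer ℝ (c x)).eval (a x) :=
    div_pos (ascPochhammer_pos n t ht)
      (prod_pos fun x hx => ascPochhammer_pos _ _ (hs.trans_le (ha x hx)))
  rw [← Real.logb_rpow_eq_mul_logb_of_pos hn_pos, ← Real.logb_mul (by positivity) (by positivity),
    ← Real.logb_mul (by positivity) (by positivity)]
  exact Real.logb_le_logb_of_le hb hratio_pos
    (ascPochhammer_eval_div_prod_le hS hc hn hs hst ha)

end RisingFactorial

section Count

variable {R α : Type*} [CommMonoid R] [DecidableEq α]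

theorem prod_filter_range_count (p : ℕ → Prop) [DecidablePred p] (g : ℕ → R) (n : ℕ) :
    ∏ k ∈ range n with p k, g (Nat.count p k) = ∏ j ∈ range (Nat.count p n), g j := by
  induction n with
  | zero => simp
  | succ n ih =>
    rw [prod_filter, prod_range_succ, ← prod_filter, ih, Nat.count_succ]
    split_ifs
    · rw [prod_range_succ]
    · simp

theorem prod_range_count_eq_prod_image (xs : ℕ → α) (f : α → ℕ → R) (n : ℕ) :
    ∏ k ∈ range n, f (xs k) (Nat.count (xs · = xs k) k) =
      ∏ x ∈ (range n).image xs, ∏ j ∈ range (Nat.count (xs · = x) n), f x j := by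
  rw [← prod_fiberwise_of_maps_to fun k hk => mem_image_of_mem xs hk]
  refine prod_congr rfl fun x _ => ?_
  rw [← prod_filter_range_count]
  exact prod_congr rfl fun k hk => by rw [(mem_filter.1 hk).2]

theorem count_ne_zero_iff_mem_image {xs : ℕ → α} {n : ℕ} {x : α} :
    Nat.count (xs · = x) n ≠ 0 ↔ x ∈ (range n).image xs := by
  simp [Nat.count_ne_iff_exists]

theorem sum_image_count (xs : ℕ → α) (n : ℕ) :
    ∑ x ∈ (range n).image xs, Nat.count (xs · = x) n = n := by
  simp only [Nat.count_eq_card_filter_range]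
  rw [← card_eq_sum_card_image, card_range]

theorem multinomial_image_count [Fintype α] (xs : ℕ → α) (n : ℕ) :
    Nat.multinomial ((range n).image xs) (fun x => Nat.count (xs · = x) n) =
      Nat.multinomial univ fun x => Nat.count (xs · = x) n :=
  Nat.multinomial_congr_of_sdiff (subset_univ _)
    (fun _ hx => not_not.1 (count_ne_zero_iff_mem_image.not.2 (mem_sdiff.1 hx).2)) fun _ _ => rfl

end Count

section RFD

variable {N d T n : ℕ} {cf : ℝ} {s0 : Fin N → ℕ} {xs : ℕ → Fin N}

theorem RFDcounts_succ_of_not_rescaleAt {k : ℕ} (hk : ¬ RFDrescaleAt cf d T s0 xs (k + 1))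
    (x : Fin N) :
    RFDcounts cf d T s0 xs (k + 1) x =
      RFDcounts cf d T s0 xs k x + if xs k = x then d else 0 := by
  have hle : ¬ T < ∑ i, RFDcounts cf d T s0 xs k i + d := fun hlt => hk ⟨k.succ_pos, hlt⟩
  simp only [RFDcounts, RFDupdate, if_neg hle, eq_comm (a := x)]
  split_ifs <;> rfl

theorem RFDtotal_succ_of_not_rescaleAt {k : ℕ} (hk : ¬ RFDrescaleAt cf d T s0 xs (k + 1)) :
    RFDtotal cf d T s0 xs (k + 1) = RFDtotal cf d T s0 xs k + d := by
  simp [RFDtotal, RFDcounts_succ_of_not_rescaleAt hk, sum_add_distrib]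

theorem RFDcodeLen_eq_neg_logb_prod (h : ∀ k < n, RFDprob cf d T s0 xs k (xs k) ≠ 0) :
    RFDcodeLen cf d T s0 xs 1 n =
      -Real.logb 2 (∏ k ∈ range n, RFDprob cf d T s0 xs k (xs k)) := by
  rw [Real.logb_prod _ _ fun k hk => h k (mem_range.1 hk), RFDcodeLen, range_eq_Ico,
    ← sum_Ico_add_right_sub_eq 0 n 1, zero_add]
  rfl

variable (hnores : ∀ k, 1 ≤ k → k < n → ¬ RFDrescaleAt cf d T s0 xs k)
include hnores

theorem RFDcounts_of_no_rescale {k : ℕ} (hk : k < n) (x : Fin N) :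
    RFDcounts cf d T s0 xs k x = s0 x + d * Nat.count (xs · = x) k := by
  induction k with
  | zero => simp [RFDcounts]
  | succ k ih =>
    rw [RFDcounts_succ_of_not_rescaleAt (hnores _ k.succ_pos hk), ih (by omega), Nat.count_succ]
    split_ifs <;> ring

theorem RFDtotal_of_no_rescale {k : ℕ} (hk : k < n) :
    RFDtotal cf d T s0 xs k = ∑ x, s0 x + d * k := by
  induction k with
  | zero => simp [RFDtotal, RFDcounts]
  | succ k ih =>
    rw [RFDtotal_succ_of_not_rescaleAt (hnores _ k.succ_pos hk), ih (by omega)]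
    ring

theorem RFDprob_of_no_rescale (hd : d ≠ 0) {k : ℕ} (hk : k < n) (x : Fin N) :
    RFDprob cf d T s0 xs k x =
      ((s0 x : ℝ) / d + Nat.count (xs · = x) k) / (((∑ y, s0 y : ℕ) : ℝ) / d + k) := by
  have hd' : (d : ℝ) ≠ 0 := Nat.cast_ne_zero.2 hd
  rw [RFDprob, RFDcounts_of_no_rescale hnores hk, RFDtotal_of_no_rescale hnores hk,
    ← div_div_div_cancel_right₀ hd']
  congr 1 <;> rw [Nat.cast_add, Nat.cast_mul, add_div, mul_div_cancel_left₀ _ hd']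

theorem prod_RFDprob_of_no_rescale (hd : d ≠ 0) :
    ∏ k ∈ range n, RFDprob cf d T s0 xs k (xs k) =
      (∏ x ∈ (range n).image xs,
          (ascPochhammer ℝ (Nat.count (xs · = x) n)).eval ((s0 x : ℝ) / d)) /
        (ascPochhammer ℝ n).eval (((∑ y, s0 y : ℕ) : ℝ) / d) := by
  simp only [ascPochhammer_eval_eq_prod_range]
  rw [← prod_range_count_eq_prod_image xs fun x j => (s0 x : ℝ) / d + j, ← prod_div_distrib]
  exact prod_congr rfl fun k hk => RFDprob_of_no_rescale hnores hd (mem_range.1 hk) (xs k)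

theorem RFDcodeLen_of_no_rescale (hd : d ≠ 0) (hs0 : ∀ i < n, 0 < s0 (xs i)) :
    RFDcodeLen cf d T s0 xs 1 n =
      Real.logb 2 ((ascPochhammer ℝ n).eval (((∑ y, s0 y : ℕ) : ℝ) / d) /
        ∏ x ∈ (range n).image xs,
          (ascPochhammer ℝ (Nat.count (xs · = x) n)).eval ((s0 x : ℝ) / d)) := by
  have hprob : ∀ k < n, RFDprob cf d T s0 xs k (xs k) ≠ 0 := fun k hk => by
    have hs : (0 : ℝ) < s0 (xs k) := Nat.cast_pos.2 (hs0 k hk)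
    have ht : (0 : ℝ) < (∑ y, s0 y : ℕ) :=
      hs.trans_le (Nat.cast_le.2 (single_le_sum_of_canonicallyOrdered (mem_univ (xs k))))
    rw [RFDprob_of_no_rescale hnores hd hk]
    positivity
  rw [RFDcodeLen_eq_neg_logb_prod hprob, prod_RFDprob_of_no_rescale hnores hd, ← Real.logb_inv,
    inv_div]

end RFD

theorem stmt9_general (N d T : ℕ) (cf : ℝ) (s0 : Fin N → ℕ) (xs : ℕ → Fin N) (hd : 1 ≤ d)
    (n : ℕ) (hn : 1 ≤ n)
    (hnores : ∀ k, 1 ≤ k → k < n → ¬ RFDrescaleAt cf d T s0 xs k)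
    (cnt : Fin N → ℕ)
    (hcnt : ∀ x, cnt x = ((Finset.range n).filter (fun i => xs i = x)).card)
    (M : ℕ) (hM : M = ((Finset.range n).image xs).card)
    (t0 : ℕ) (ht0 : t0 = ∑ y, s0 y)
    (s0r : ℝ) (hs0r : 0 < s0r) (hs0rle : ∀ i < n, s0r ≤ (s0 (xs i) : ℝ)) :
    RFDcodeLen cf d T s0 xs 1 n ≤
      Real.logb 2 (Nat.multinomial Finset.univ cnt : ℝ)
      + ((M : ℝ) - 1 + ((t0 : ℝ) - s0r) / d) * Real.logb 2 n
      + Real.logb 2 (((t0 : ℝ) / d * Real.exp ((t0 : ℝ) / d)) /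
          ((s0r / d) ^ M * (M : ℝ) ^ ((M : ℝ) - s0r / d))) := by
  have hd' : (0 : ℝ) < d := Nat.cast_pos.2 hd
  have hS : ((range n).image xs).Nonempty := (nonempty_range_iff.2 (by omega)).image xs
  have hle_image : ∀ x ∈ (range n).image xs, s0r ≤ s0 x :=
    forall_mem_image.2 fun i hi => hs0rle i (mem_range.1 hi)
  have hle_total : s0r ≤ t0 := (hs0rle 0 hn).trans <|
    ht0 ▸ Nat.cast_le.2 (single_le_sum_of_canonicallyOrdered (mem_univ (xs 0)))
  have hpos : ∀ i < n, 0 < s0 (xs i) := fun i hi => Nat.cast_pos.1 (hs0r.trans_le (hs0rle i hi))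
  obtain rfl : cnt = fun x => Nat.count (xs · = x) n :=
    funext fun x => by rw [hcnt, Nat.count_eq_card_filter_range]
  rw [RFDcodeLen_of_no_rescale hnores (by omega) hpos, ← ht0, hM, sub_div,
    ← multinomial_image_count]
  exact logb_ascPochhammer_eval_div_prod_le one_lt_two hS
    (fun _ => count_ne_zero_iff_mem_image.2) (sum_image_count xs n) (div_pos hs0r hd')
    (div_le_div_of_nonneg_right hle_total hd'.le)
    fun x hx => div_le_div_of_nonneg_right (hle_image x hx) hd'.le

/-- Lemma 5: for a realization of Algorithm RFD whose rescale partition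
is `{[1,n]}` (no rescale in steps `1,…,n-1`), with `c(x)` the number of occurrences of `x`
in `x^n`, `M` the number of distinct symbols in `x^n`, `t0 = Σ_y s0(y)` and `s0 ≤ s0(x)`
for all `x`:
`ℓ(x^n; RFD) ≤ log₂ (n choose c(1),…,c(N)) + (M - 1 + (t0 - s0)/d)·log₂ n
  + log₂( (t0/d)·e^(t0/d) / ((s0/d)^M · M^(M - s0/d)) )`. -/
theorem stmt9 (N d T : ℕ) (cf : ℝ) (hN : 1 < N)
    (s0 : Fin N → ℕ) (xs : ℕ → Fin N)
    (hd : 1 ≤ d) (hc0 : 0 ≤ cf) (hc1 : cf < 1)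
    (hT : (d : ℝ) ≤ (1 - cf) * ((T : ℝ) - N))
    (hs0 : ∀ x, 1 ≤ s0 x) (hsum : ∑ x, s0 x ≤ T)
    (n : ℕ) (hn : 1 ≤ n)
    (hnores : ∀ k, 1 ≤ k → k < n → ¬ RFDrescaleAt cf d T s0 xs k)
    (cnt : Fin N → ℕ)
    (hcnt : ∀ x, cnt x = ((Finset.range n).filter (fun i => xs i = x)).card)
    (M : ℕ) (hM : M = ((Finset.range n).image xs).card)
    (t0 : ℕ) (ht0 : t0 = ∑ y, s0 y)
    (s0r : ℝ) (hs0r : 0 < s0r) (hs0rle : ∀ x, s0r ≤ (s0 x : ℝ)) :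
    RFDcodeLen cf d T s0 xs 1 n ≤
      Real.logb 2 (Nat.multinomial Finset.univ cnt : ℝ)
      + ((M : ℝ) - 1 + ((t0 : ℝ) - s0r) / d) * Real.logb 2 n
      + Real.logb 2 (((t0 : ℝ) / d * Real.exp ((t0 : ℝ) / d)) /
          ((s0r / d) ^ M * (M : ℝ) ^ ((M : ℝ) - s0r / d))) :=
  stmt9_general N d T cf s0 xs hd n hn hnores cnt hcnt M hM t0 ht0 s0r hs0r fun i _ =>
    hs0rle (xs i)
end

section
/- Let A := N/d + c·L and for z > 0 define r(z) := (N + A)·log₂ z + log₂((A+1)·e^{A+1}) + N·log₂ d. For any realization of Algorithm RFD on x^n, any interval I = [a,b] ⊆ [1,n] with induced rescale partition R_I, and any probability distribution p on X, it holds that ℓ(x_a^b; RFD) − ℓ(x_a^b; p) ≤ |R_I|·r(|I|/|R_I|) + (1−c)·L·log₂(e·m) + log₂((1−c)·L), where m is the length of the first segment of R_I. -/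
open Finset

/-- The redundancy function `r(z) = (N + A)·log₂ z + log₂((A+1)·e^(A+1)) + N·log₂ d`. -/
noncomputable def rBound (N d : ℕ) (A z : ℝ) : ℝ :=
  ((N : ℝ) + A) * Real.logb 2 z + Real.logb 2 ((A + 1) * Real.exp (A + 1))
    + (N : ℝ) * Real.logb 2 d

/-! Between two rescales, RFD is a frequency counter whose weights are the counts divided by `d`.
Consider such a segment of length `m` in which the letter `x` occurs `n x` times. The numerators
multiply to at least `∏ x, (n x)! / (d * m)`, while a distribution gives the segment a likelihood of
at most the inverse multinomial coefficient `(∏ x, (n x)!) / m!`. If the total weight at the start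
is at most `A + 1`, the denominators exceed `m!` by at most the factor `exp (A * (1 + log m))`, by
the harmonic sum.

Right after a rescale the total is at most `N + cf * (T - N) + d = (A + 1) * d`. Only the first
segment may start from a total up to `T = (A + (1 - cf) * L) * d`, which replaces its `A` by
`A + ((1 - cf) * L - 1)`. As the redundancy bound is concave in the length of the segment, Jensen's
inequality bounds the sum over all segments. -/

section Concavity

lemma list_sum_map_le_of_concaveOn {f : ℝ → ℝ} {s : Set ℝ} (hf : ConcaveOn ℝ s f) {l : List ℝ}
    (hl : l ≠ []) (hs : ∀ z ∈ l, z ∈ s) :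
    (l.map f).sum ≤ l.length * f (l.sum / l.length) := by
  have hlen : (0 : ℝ) < l.length := by exact_mod_cast List.length_pos_iff.2 hl
  have jensen := hf.le_map_sum (t := univ) (w := fun _ : Fin l.length => (l.length : ℝ)⁻¹)
    (p := fun i => l[i]) (fun _ _ => by positivity) (by simp [hlen.ne'])
    (fun i _ => hs _ (List.getElem_mem i.isLt))
  simp only [smul_eq_mul, ← mul_sum, Fin.getElem_fin] at jensen
  rw [Fin.sum_univ_fun_getElem l f, Fin.sum_univ_getElem, inv_mul_le_iff₀ hlen,
    inv_mul_eq_div] at jensen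
  exact jensen

lemma concaveOn_logb {b : ℝ} (hb : 1 ≤ b) : ConcaveOn ℝ (Set.Ioi 0) (Real.logb b) := by
  have hlogb : Real.logb b = fun x => (Real.log b)⁻¹ • Real.log x :=
    funext fun x => div_eq_inv_mul _ _
  exact hlogb ▸ strictConcaveOn_log_Ioi.concaveOn.smul (inv_nonneg.2 (Real.log_nonneg hb))

end Concavity

section Counting

variable {α : Type*} [Fintype α]

lemma multinomial_mul_prod_pow_le_one {p : α → ℝ} (hp0 : ∀ x, 0 ≤ p x) (hp1 : ∑ x, p x ≤ 1)
    (c : α → ℕ) : (Nat.multinomial univ c : ℝ) * ∏ x, p x ^ c x ≤ 1 := by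
  classical
  calc (Nat.multinomial univ c : ℝ) * ∏ x, p x ^ c x
      ≤ ∑ k ∈ piAntidiag univ (∑ x, c x), (Nat.multinomial univ k : ℝ) * ∏ x, p x ^ k x :=
        single_le_sum (f := fun k : α → ℕ => (Nat.multinomial univ k : ℝ) * ∏ x, p x ^ k x)
          (fun k _ => mul_nonneg (Nat.cast_nonneg _) (prod_nonneg fun x _ => pow_nonneg (hp0 x) _))
          (by simp)
    _ = (∑ x, p x) ^ ∑ x, c x := (sum_pow_eq_sum_piAntidiag univ p _).symm
    _ ≤ 1 := pow_le_one₀ (sum_nonneg fun x _ => hp0 x) hp1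

lemma sum_mul_log_le_sum_log_factorial_sub {p : α → ℝ} (hp0 : ∀ x, 0 ≤ p x)
    (hp1 : ∑ x, p x ≤ 1) {c : α → ℕ} (hc : ∀ x, c x ≠ 0 → p x ≠ 0) :
    ∑ x, c x * Real.log (p x) ≤
      ∑ x, Real.log (c x).factorial - Real.log (∑ x, c x).factorial := by
  have pow_pos_of_count (x : α) : 0 < p x ^ c x := by
    rcases eq_or_ne (c x) 0 with h | h
    · simp [h]
    · exact pow_pos ((hp0 x).lt_of_ne' (hc x h)) _
  have prod_pos : 0 < ∏ x, p x ^ c x := Finset.prod_pos fun x _ => pow_pos_of_count x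
  have multinomial_pos : (0 : ℝ) < Nat.multinomial univ c := by
    exact_mod_cast Nat.multinomial_pos univ c
  have log_le_zero := Real.log_nonpos (by positivity) (multinomial_mul_prod_pow_le_one hp0 hp1 c)
  have log_multinomial : ∑ x, Real.log (c x).factorial + Real.log (Nat.multinomial univ c) =
      Real.log (∑ x, c x).factorial := by
    rw [← Nat.multinomial_spec univ c, Nat.cast_mul, Nat.cast_prod,
      Real.log_mul (by positivity) multinomial_pos.ne', Real.log_prod fun x _ => by positivity]
  rw [Real.log_mul multinomial_pos.ne' prod_pos.ne',
    Real.log_prod fun x _ => (pow_pos_of_count x).ne'] at log_le_zero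
  simp only [Real.log_pow] at log_le_zero
  linarith

variable [DecidableEq α]

lemma sum_count_eq (y : ℕ → α) (m : ℕ) : ∑ x, Nat.count (y · = x) m = m := by
  induction m with
  | zero => simp
  | succ m ih => simp [Nat.count_succ, sum_add_distrib, ih]

lemma sum_range_count {M : Type*} [AddCommMonoid M] (y : ℕ → α) (h : α → ℕ → M) (m : ℕ) :
    ∑ k ∈ range m, h (y k) (Nat.count (y · = y k) k) =
      ∑ x, ∑ j ∈ range (Nat.count (y · = x) m), h x j := by
  induction m with
  | zero => simp
  | succ m ih =>
    have split_last (x : α) : ∑ j ∈ range (Nat.count (y · = x) (m + 1)), h x j =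
        ∑ j ∈ range (Nat.count (y · = x) m), h x j +
          if y m = x then h x (Nat.count (y · = x) m) else 0 := by
      rw [Nat.count_succ]
      split_ifs <;> simp [sum_range_succ]
    simp [sum_range_succ, ih, split_last, sum_add_distrib]

lemma sum_log_le_sum_log_factorial_sub {p : α → ℝ} (hp0 : ∀ x, 0 ≤ p x) (hp1 : ∑ x, p x ≤ 1)
    {y : ℕ → α} {m : ℕ} (hy : ∀ k < m, p (y k) ≠ 0) :
    ∑ k ∈ range m, Real.log (p (y k)) ≤
      ∑ x, Real.log (Nat.count (y · = x) m).factorial - Real.log m.factorial := by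
  have ne_zero_of_count (x : α) (hx : Nat.count (y · = x) m ≠ 0) : p x ≠ 0 := by
    obtain ⟨k, hk, rfl⟩ := Nat.count_ne_iff_exists.1 hx
    exact hy k hk
  calc ∑ k ∈ range m, Real.log (p (y k))
      = ∑ x, Nat.count (y · = x) m * Real.log (p x) := by
        simpa using sum_range_count y (fun x _ => Real.log (p x)) m
    _ ≤ _ := by
        simpa [sum_count_eq] using sum_mul_log_le_sum_log_factorial_sub hp0 hp1 ne_zero_of_count

end Counting

section FrequencyCounting

lemma log_factorial_eq_sum_range (n : ℕ) :
    Real.log n.factorial = ∑ j ∈ range n, Real.log (j + 1) := by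
  rw [← prod_range_add_one_eq_factorial, Nat.cast_prod, Real.log_prod fun j _ => by positivity]
  simp

lemma log_factorial_le_sum_log_add {δ σ : ℝ} {m n : ℕ} (hδ0 : 0 < δ) (hδ1 : δ ≤ 1) (hσ : δ ≤ σ)
    (hnm : n ≤ m) :
    Real.log n.factorial ≤
      ∑ j ∈ range n, Real.log (σ + j) + (Real.log m - Real.log δ) := by
  have log_δ_nonpos := Real.log_nonpos hδ0.le hδ1
  rcases n with _ | n
  · have log_m_nonneg := Real.log_natCast_nonneg m
    simpa using log_δ_nonpos.trans log_m_nonneg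
  · have tail_le : ∑ j ∈ range n, Real.log (j + 1) ≤
        ∑ j ∈ range n, Real.log (σ + (j + 1 : ℕ)) :=
      sum_le_sum fun j _ => Real.log_le_log (by positivity) (by push_cast; linarith)
    have head_le : Real.log δ ≤ Real.log (σ + (0 : ℕ)) :=
      Real.log_le_log hδ0 (by simpa using hσ)
    have last_le : Real.log (n + 1) ≤ Real.log m :=
      Real.log_le_log (by positivity) (by exact_mod_cast hnm)
    rw [log_factorial_eq_sum_range, sum_range_succ, sum_range_succ']
    linarith

lemma log_add_one_add_le {A j : ℝ} (hA : 0 ≤ A) (hj : 0 ≤ j) :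
    Real.log (A + 1 + j) ≤ Real.log (j + 1) + A * (j + 1)⁻¹ := by
  have tangent := Real.log_le_sub_one_of_pos (show 0 < (A + 1 + j) / (j + 1) by positivity)
  rw [Real.log_div (by positivity) (by positivity)] at tangent
  have : (A + 1 + j) / (j + 1) - 1 = A * (j + 1)⁻¹ := by
    field_simp
    ring
  linarith

lemma sum_log_add_one_add_le {A : ℝ} (hA : 0 ≤ A) (m : ℕ) :
    ∑ j ∈ range m, Real.log (A + 1 + j) ≤ Real.log m.factorial + A * (1 + Real.log m) := by
  have harmonic_le : ∑ j ∈ range m, ((j : ℝ) + 1)⁻¹ ≤ 1 + Real.log m := by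
    simpa [harmonic] using harmonic_le_one_add_log m
  calc ∑ j ∈ range m, Real.log (A + 1 + j)
      ≤ ∑ j ∈ range m, (Real.log (j + 1) + A * ((j : ℝ) + 1)⁻¹) :=
        sum_le_sum fun j _ => log_add_one_add_le hA j.cast_nonneg
    _ = Real.log m.factorial + A * ∑ j ∈ range m, ((j : ℝ) + 1)⁻¹ := by
        rw [sum_add_distrib, log_factorial_eq_sum_range, mul_sum]
    _ ≤ _ := by gcongr

variable {α : Type*} [Fintype α] [DecidableEq α]

/-- The frequency-counting (Pólya urn) estimator: the probability it assigns to `x` after the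
first `k` letters of `y`, when letter `z` starts with weight `σ z` and every occurrence adds `1`.
Between two rescales, RFD is this estimator with the counts divided by the increment `d`. -/
noncomputable def freqProb (σ : α → ℝ) (y : ℕ → α) (k : ℕ) (x : α) : ℝ :=
  (σ x + Nat.count (y · = x) k) / (∑ z, σ z + k)

lemma sum_log_freqProb_ge {σ : α → ℝ} {δ A : ℝ} (hδ0 : 0 < δ) (hδ1 : δ ≤ 1)
    (hσ : ∀ x, δ ≤ σ x) (hA : 0 ≤ A) (hσA : ∑ x, σ x ≤ A + 1) (y : ℕ → α) (m : ℕ) :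
    ∑ x, Real.log (Nat.count (y · = x) m).factorial - Real.log m.factorial -
        (Fintype.card α * (Real.log m - Real.log δ) + A * (1 + Real.log m)) ≤
      ∑ k ∈ range m, Real.log (freqProb σ y k (y k)) := by
  have σ_pos (x : α) : 0 < σ x := hδ0.trans_le (hσ x)
  have count_le (x : α) : Nat.count (y · = x) m ≤ m := Nat.count_le _
  have numerators : ∑ x, Real.log (Nat.count (y · = x) m).factorial ≤
      ∑ k ∈ range m, Real.log (σ (y k) + Nat.count (y · = y k) k) +
        Fintype.card α * (Real.log m - Real.log δ) := by
    rw [sum_range_count y (fun x j => Real.log (σ x + j)) m]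
    simpa [sum_add_distrib, mul_sub] using sum_le_sum fun x (_ : x ∈ univ) =>
      log_factorial_le_sum_log_add hδ0 hδ1 (hσ x) (count_le x)
  have denominators := sum_log_add_one_add_le hA m
  have term_ge (k : ℕ) : Real.log (σ (y k) + Nat.count (y · = y k) k) - Real.log (A + 1 + k) ≤
      Real.log (freqProb σ y k (y k)) := by
    have num_pos : 0 < σ (y k) + Nat.count (y · = y k) k :=
      add_pos_of_pos_of_nonneg (σ_pos _) (Nat.cast_nonneg _)
    have total_pos : 0 < ∑ z, σ z :=
      sum_pos (fun z _ => σ_pos z) ⟨y k, mem_univ _⟩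
    rw [freqProb, Real.log_div num_pos.ne' (by positivity)]
    gcongr
  have summed := sum_le_sum fun k (_ : k ∈ range m) => term_ge k
  rw [sum_sub_distrib] at summed
  linarith

theorem sum_log_sub_log_freqProb_le {σ p : α → ℝ} {δ A : ℝ} (hδ0 : 0 < δ) (hδ1 : δ ≤ 1)
    (hσ : ∀ x, δ ≤ σ x) (hA : 0 ≤ A) (hσA : ∑ x, σ x ≤ A + 1)
    (hp0 : ∀ x, 0 ≤ p x) (hp1 : ∑ x, p x ≤ 1) {y : ℕ → α} {m : ℕ} (hy : ∀ k < m, p (y k) ≠ 0) :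
    ∑ k ∈ range m, (Real.log (p (y k)) - Real.log (freqProb σ y k (y k))) ≤
      Fintype.card α * (Real.log m - Real.log δ) + A * (1 + Real.log m) := by
  have hp := sum_log_le_sum_log_factorial_sub hp0 hp1 hy
  have hfreq := sum_log_freqProb_ge hδ0 hδ1 hσ hA hσA y m
  rw [sum_sub_distrib]
  linarith

end FrequencyCounting

namespace ConsecPartition

variable {a b : ℕ} {P : List (ℕ × ℕ)}

lemma singleton (hab : a ≤ b) : ConsecPartition a b [(a, b)] :=
  ⟨by simp, rfl, rfl, by simpa using hab, List.isChain_singleton _⟩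

lemma cons {c : ℕ} (hac : a ≤ c) (hP : ConsecPartition (c + 1) b P) :
    ConsecPartition a b ((a, c) :: P) := by
  obtain ⟨hne, hhead, hlast, hle, hchain⟩ := hP
  obtain ⟨z, l, rfl⟩ := List.exists_cons_of_ne_nil hne
  exact ⟨by simp, by simp, by simpa using hlast, List.forall_mem_cons.2 ⟨hac, hle⟩,
    List.isChain_cons_cons.2 ⟨by simpa using hhead, hchain⟩⟩

@[elab_as_elim]
lemma induction_on {motive : ∀ a P, ConsecPartition a b P → Prop}
    (singleton : ∀ a (hab : a ≤ b), motive a [(a, b)] (.singleton hab))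
    (cons : ∀ a c l (hac : a ≤ c) (hl : ConsecPartition (c + 1) b l), motive (c + 1) l hl →
      motive a ((a, c) :: l) (.cons hac hl)) (hP : ConsecPartition a b P) :
    motive a P hP := by
  induction P generalizing a with
  | nil => exact absurd rfl hP.1
  | cons x l ih =>
    obtain ⟨-, hhead, hlast, hle, hchain⟩ := hP
    obtain ⟨i, j⟩ := x
    obtain rfl : i = a := by simpa using hhead
    have hij : i ≤ j := hle _ List.mem_cons_self
    rcases l with _ | ⟨z, l⟩
    · obtain rfl : j = b := by simpa using hlast
      exact singleton i hij
    · obtain ⟨hz, hchain⟩ := List.isChain_cons_cons.1 hchain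
      have htail : ConsecPartition (j + 1) b (z :: l) :=
        ⟨by simp, by simpa using hz, by simpa using hlast,
          fun p hp => hle p (List.mem_cons_of_mem _ hp), hchain⟩
      exact cons i j _ hij htail (ih htail)

lemma le (hP : ConsecPartition a b P) : a ≤ b := by
  induction hP using induction_on with
  | singleton _ hab => exact hab
  | cons _ c _ hac _ ih => omega

lemma mem_bounds (hP : ConsecPartition a b P) : ∀ p ∈ P, a ≤ p.1 ∧ p.1 ≤ p.2 ∧ p.2 ≤ b := by
  induction hP using induction_on with
  | singleton a hab => simpa using hab
  | cons a c l hac hl ih =>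
    have := hl.le
    rintro p (_ | ⟨_, hp⟩)
    · exact ⟨le_rfl, hac, by omega⟩
    · have := ih p hp
      omega

lemma sum_Icc {M : Type*} [AddCommMonoid M] (hP : ConsecPartition a b P) (f : ℕ → M) :
    ∑ k ∈ Icc a b, f k = (P.map fun p => ∑ k ∈ Icc p.1 p.2, f k).sum := by
  induction hP using induction_on with
  | singleton a _ => simp
  | cons a c l hac hl ih =>
    have := hl.le
    rw [List.map_cons, List.sum_cons, ← ih]
    simp only [← Ico_add_one_right_eq_Icc]
    exact (sum_Ico_consecutive f (by omega) (by omega)).symm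

lemma sum_length (hP : ConsecPartition a b P) :
    (P.map fun p => p.2 - p.1 + 1).sum = b - a + 1 := by
  induction hP using induction_on with
  | singleton a _ => simp
  | cons a c l hac hl ih =>
    have := hl.le
    rw [List.map_cons, List.sum_cons, ih]
    omega

lemma sum_map_length_le_of_concaveOn {f : ℝ → ℝ} (hP : ConsecPartition a b P)
    (hf : ConcaveOn ℝ (Set.Ioi 0) f) :
    (P.map fun p => f (p.2 - p.1 + 1 : ℕ)).sum ≤ P.length * f ((b - a + 1 : ℕ) / P.length) := by
  have jensen := list_sum_map_le_of_concaveOn hf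
    (l := P.map fun p => ((p.2 - p.1 + 1 : ℕ) : ℝ)) (by simpa using hP.1)
    (by simp only [List.mem_map, Set.mem_Ioi]; rintro _ ⟨p, -, rfl⟩; positivity)
  rw [← hP.sum_length, Nat.cast_list_sum]
  simpa only [List.map_map, List.length_map, Function.comp_def] using jensen

lemma exists_pred_of_mem_tail (hP : ConsecPartition a b P) :
    ∀ p ∈ P.tail, ∃ p' ∈ P, p'.2 < b ∧ p'.2 + 1 = p.1 := by
  induction hP using induction_on with
  | singleton a _ => simp
  | cons a c l _ hl ih =>
    have := hl.le
    obtain ⟨-, hhead, -⟩ := hl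
    rcases l with _ | ⟨z, l⟩
    · simp
    · rintro p (_ | ⟨_, hp⟩)
      · exact ⟨(a, c), List.mem_cons_self, by omega, by simpa using hhead.symm⟩
      · obtain ⟨p', hp', h⟩ := ih p hp
        exact ⟨p', List.mem_cons_of_mem _ hp', h⟩

end ConsecPartition

section SegmentRedundancy

/-- The redundancy in bits of frequency counting with increment `d` on a rescale-free segment of
length `z` that starts from a total of at most `(A + 1) * d`, over an alphabet with `N` letters.
It is `rBound` with the factor `(A + 1) * exp (A + 1)` sharpened to `exp A`. -/
noncomputable def segmentRedundancy (N d : ℕ) (A z : ℝ) : ℝ :=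
  (N + A) * Real.logb 2 z + A * Real.logb 2 (Real.exp 1) + N * Real.logb 2 d

lemma concaveOn_segmentRedundancy (N d : ℕ) {A : ℝ} (hA : 0 ≤ A) :
    ConcaveOn ℝ (Set.Ioi 0) (segmentRedundancy N d A) :=
  (((concaveOn_logb one_le_two).smul (show 0 ≤ N + A by positivity)).add_const _).add_const _

lemma segmentRedundancy_add (N d : ℕ) (A E : ℝ) {z : ℝ} (hz : z ≠ 0) :
    segmentRedundancy N d (A + E) z =
      segmentRedundancy N d A z + E * Real.logb 2 (Real.exp 1 * z) := by
  rw [segmentRedundancy, segmentRedundancy, Real.logb_mul (Real.exp_ne_zero 1) hz]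
  ring

lemma segmentRedundancy_le_rBound (N d : ℕ) {A : ℝ} (hA : 0 ≤ A) (z : ℝ) :
    segmentRedundancy N d A z ≤ rBound N d A z := by
  have logb_exp_nonneg := Real.logb_nonneg one_lt_two (Real.one_le_exp zero_le_one)
  have logb_A_nonneg := Real.logb_nonneg one_lt_two (show 1 ≤ A + 1 by linarith)
  rw [segmentRedundancy, rBound, Real.logb_mul (by positivity) (by positivity),
    ← Real.exp_one_rpow (A + 1), Real.logb_rpow_eq_mul_logb_of_pos (Real.exp_pos 1)]
  linarith

lemma mul_segmentRedundancy_add_le {N d R m : ℕ} {A C : ℝ} (hA : 0 ≤ A) (hC : 1 ≤ C) (hm : 1 ≤ m)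
    (z : ℝ) :
    R * segmentRedundancy N d A z + (C - 1) * Real.logb 2 (Real.exp 1 * m) ≤
      R * rBound N d A z + C * Real.logb 2 (Real.exp 1 * m) + Real.logb 2 C := by
  have scaled := mul_le_mul_of_nonneg_left (segmentRedundancy_le_rBound N d hA z)
    (Nat.cast_nonneg (α := ℝ) R)
  have logb_C_nonneg := Real.logb_nonneg one_lt_two hC
  have logb_m_nonneg := Real.logb_nonneg one_lt_two <|
    one_le_mul_of_one_le_of_one_le (Real.one_le_exp zero_le_one) (Nat.one_le_cast (α := ℝ).2 hm)
  linarith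

end SegmentRedundancy

section Algorithm

variable {N d T : ℕ} {cf : ℝ} {s0 : Fin N → ℕ} {xs : ℕ → Fin N} {p : Fin N → ℝ}

lemma RFDcounts_succ_apply (k : ℕ) (x : Fin N) :
    RFDcounts cf d T s0 xs (k + 1) x =
      (if T < RFDtotal cf d T s0 xs k + d then max 1 ⌊cf * RFDcounts cf d T s0 xs k x⌋₊
        else RFDcounts cf d T s0 xs k x) + if xs k = x then d else 0 := by
  rw [RFDcounts, RFDupdate, ← RFDtotal]
  simp only [eq_comm (a := x)]
  split_ifs <;> rfl

lemma RFDtotal_succ (k : ℕ) :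
    RFDtotal cf d T s0 xs (k + 1) =
      (if T < RFDtotal cf d T s0 xs k + d then ∑ x, max 1 ⌊cf * RFDcounts cf d T s0 xs k x⌋₊
        else RFDtotal cf d T s0 xs k) + d := by
  rw [RFDtotal]
  simp only [RFDcounts_succ_apply, sum_add_distrib, sum_ite_eq, mem_univ, if_true]
  split_ifs <;> rfl

lemma one_le_RFDcounts (hs0 : ∀ x, 1 ≤ s0 x) (k : ℕ) (x : Fin N) :
    1 ≤ RFDcounts cf d T s0 xs k x := by
  induction k with
  | zero => exact hs0 x
  | succ k ih =>
    rw [RFDcounts_succ_apply]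
    refine Nat.le_add_right_of_le ?_
    split_ifs
    · exact le_max_left _ _
    · exact ih

lemma max_one_floor_mul_le {c : ℝ} (hc0 : 0 ≤ c) (hc1 : c ≤ 1) {n : ℕ} (hn : 1 ≤ n) :
    ((max 1 ⌊c * n⌋₊ : ℕ) : ℝ) ≤ 1 + c * (n - 1) := by
  have hn' : (1 : ℝ) ≤ n := by exact_mod_cast hn
  rw [Nat.cast_max, Nat.cast_one]
  refine max_le (le_add_of_nonneg_right (mul_nonneg hc0 (by linarith))) ?_
  have := Nat.floor_le (mul_nonneg hc0 n.cast_nonneg)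
  linarith

lemma sum_max_one_floor_mul_le {α : Type*} [Fintype α] {c : ℝ} (hc0 : 0 ≤ c) (hc1 : c ≤ 1)
    {s : α → ℕ} (hs : ∀ x, 1 ≤ s x) :
    ((∑ x, max 1 ⌊c * s x⌋₊ : ℕ) : ℝ) ≤
      Fintype.card α + c * ((∑ x, s x : ℕ) - Fintype.card α) := by
  rw [Nat.cast_sum]
  refine (sum_le_sum fun x _ => max_one_floor_mul_le hc0 hc1 (hs x)).trans_eq ?_
  simp [sum_add_distrib, ← mul_sum]

lemma RFDtotal_succ_le_of_rescale (hc0 : 0 ≤ cf) (hc1 : cf ≤ 1) (hs0 : ∀ x, 1 ≤ s0 x) {k : ℕ}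
    (hk : RFDtotal cf d T s0 xs k ≤ T) (hresc : T < RFDtotal cf d T s0 xs k + d) :
    (RFDtotal cf d T s0 xs (k + 1) : ℝ) ≤ N + cf * (T - N) + d := by
  have hk' : (RFDtotal cf d T s0 xs k : ℝ) ≤ T := by exact_mod_cast hk
  have hrescaled := sum_max_one_floor_mul_le hc0 hc1
    (one_le_RFDcounts (cf := cf) (d := d) (T := T) (xs := xs) hs0 k)
  rw [Fintype.card_fin, ← RFDtotal] at hrescaled
  rw [RFDtotal_succ, if_pos hresc, Nat.cast_add]
  gcongr
  exact hrescaled.trans (by gcongr)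

lemma RFDtotal_le (hc0 : 0 ≤ cf) (hc1 : cf ≤ 1) (hT : (d : ℝ) ≤ (1 - cf) * (T - N))
    (hs0 : ∀ x, 1 ≤ s0 x) (hsum : ∑ x, s0 x ≤ T) (k : ℕ) :
    RFDtotal cf d T s0 xs k ≤ T := by
  induction k with
  | zero => exact hsum
  | succ k ih =>
    by_cases hresc : T < RFDtotal cf d T s0 xs k + d
    · have := RFDtotal_succ_le_of_rescale hc0 hc1 hs0 ih hresc
      exact_mod_cast (show (RFDtotal cf d T s0 xs (k + 1) : ℝ) ≤ T by linarith)
    · rw [RFDtotal_succ, if_neg hresc]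
      omega

lemma RFDtotal_le_of_rescaleAt (hc0 : 0 ≤ cf) (hc1 : cf ≤ 1)
    (hT : (d : ℝ) ≤ (1 - cf) * (T - N)) (hs0 : ∀ x, 1 ≤ s0 x) (hsum : ∑ x, s0 x ≤ T) {k : ℕ}
    (hresc : RFDrescaleAt cf d T s0 xs k) :
    (RFDtotal cf d T s0 xs k : ℝ) ≤ N + cf * (T - N) + d := by
  obtain ⟨hk, hresc⟩ := hresc
  obtain ⟨k, rfl⟩ := Nat.exists_eq_add_of_le' hk
  exact RFDtotal_succ_le_of_rescale hc0 hc1 hs0 (RFDtotal_le hc0 hc1 hT hs0 hsum k) hresc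

lemma RFDcounts_add_of_not_rescaleAt {u k : ℕ}
    (h : ∀ j, u < j → j ≤ u + k → ¬ RFDrescaleAt cf d T s0 xs j) (x : Fin N) :
    RFDcounts cf d T s0 xs (u + k) x =
      RFDcounts cf d T s0 xs u x + d * Nat.count (fun j => xs (u + j) = x) k := by
  induction k with
  | zero => simp
  | succ k ih =>
    have hresc : ¬ T < RFDtotal cf d T s0 xs (u + k) + d := fun hlt =>
      h (u + k + 1) (by omega) le_rfl ⟨by omega, hlt⟩
    rw [← Nat.add_assoc, RFDcounts_succ_apply, if_neg hresc,
      ih fun j hj hj' => h j hj (by omega), Nat.count_succ]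
    split_ifs <;> ring

lemma RFDprob_add_eq_freqProb (hd : d ≠ 0) {u k : ℕ}
    (h : ∀ j, u < j → j ≤ u + k → ¬ RFDrescaleAt cf d T s0 xs j) (x : Fin N) :
    RFDprob cf d T s0 xs (u + k) x =
      freqProb (fun z => (RFDcounts cf d T s0 xs u z : ℝ) / d) (fun j => xs (u + j)) k x := by
  have hd' : (d : ℝ) ≠ 0 := by exact_mod_cast hd
  have htotal : RFDtotal cf d T s0 xs (u + k) = RFDtotal cf d T s0 xs u + d * k := by
    simp only [RFDtotal, RFDcounts_add_of_not_rescaleAt h, sum_add_distrib, ← mul_sum,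
      sum_count_eq]
  rw [RFDprob, htotal, RFDcounts_add_of_not_rescaleAt h, freqProb, ← sum_div, ← Nat.cast_sum,
    ← RFDtotal]
  push_cast
  field_simp

lemma RFDcodeLen_sub_distCodeLen (i j : ℕ) :
    RFDcodeLen cf d T s0 xs i j - distCodeLen p xs i j =
      (∑ k ∈ Icc i j, (Real.log (p (xs (k - 1))) -
        Real.log (RFDprob cf d T s0 xs (k - 1) (xs (k - 1))))) / Real.log 2 := by
  simp only [RFDcodeLen, distCodeLen, Real.logb, sum_sub_distrib, ← sum_div]
  ring

theorem RFDcodeLen_sub_distCodeLen_le_of_not_rescaleAt (hd : 1 ≤ d) (hs0 : ∀ x, 1 ≤ s0 x)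
    (hp0 : ∀ x, 0 ≤ p x) (hp1 : ∑ x, p x ≤ 1) {i j : ℕ} (hi : 1 ≤ i) (hij : i ≤ j)
    (hno : ∀ k, i ≤ k → k < j → ¬ RFDrescaleAt cf d T s0 xs k)
    (hp : ∀ k ∈ Icc i j, p (xs (k - 1)) ≠ 0)
    {A : ℝ} (hA : 0 ≤ A) (htotal : RFDtotal cf d T s0 xs (i - 1) ≤ (A + 1) * d) :
    RFDcodeLen cf d T s0 xs i j - distCodeLen p xs i j ≤
      segmentRedundancy N d A (j - i + 1 : ℕ) := by
  obtain ⟨u, rfl⟩ := Nat.exists_eq_add_of_le' hi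
  obtain ⟨l, rfl⟩ := Nat.exists_eq_add_of_le hij
  have hd0 : (0 : ℝ) < d := by exact_mod_cast hd
  have shift (k : ℕ) : u + 1 + k - 1 = u + k := by omega
  have hlen : u + 1 + l - (u + 1) + 1 = l + 1 := by omega
  have hnats := sum_log_sub_log_freqProb_le (σ := fun z => (RFDcounts cf d T s0 xs u z : ℝ) / d)
    (δ := 1 / d) (y := fun k => xs (u + k)) (m := l + 1) (by positivity)
    ((div_le_one hd0).2 (by exact_mod_cast hd))
    (fun z => by gcongr; exact_mod_cast one_le_RFDcounts hs0 u z) hA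
    (by rw [← sum_div, div_le_iff₀ hd0, ← Nat.cast_sum]; exact htotal) hp0 hp1
    (fun k hk => shift k ▸ hp (u + 1 + k) (mem_Icc.2 (by omega)))
  have hsum : ∑ k ∈ Icc (u + 1) (u + 1 + l), (Real.log (p (xs (k - 1))) -
        Real.log (RFDprob cf d T s0 xs (k - 1) (xs (k - 1)))) =
      ∑ k ∈ range (l + 1), (Real.log (p (xs (u + k))) - Real.log (freqProb
        (fun z => (RFDcounts cf d T s0 xs u z : ℝ) / d) (fun k => xs (u + k)) k (xs (u + k)))) := by
    rw [← Ico_add_one_right_eq_Icc, sum_Ico_eq_sum_range, Nat.add_assoc (u + 1),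
      Nat.add_sub_cancel_left]
    refine sum_congr rfl fun k hk => ?_
    rw [shift, RFDprob_add_eq_freqProb (by omega) fun t ht ht' =>
      hno t ht (by have := mem_range.1 hk; omega)]
  rw [RFDcodeLen_sub_distCodeLen, hsum, hlen, div_le_iff₀ (Real.log_pos one_lt_two)]
  refine hnats.trans_eq ?_
  rw [Fintype.card_fin, one_div, Real.log_inv]
  simp only [segmentRedundancy, Real.logb, Real.log_exp]
  field_simp
  ring

namespace RFDrescalePartition

variable {a b : ℕ} {P : List (ℕ × ℕ)} {q : ℕ × ℕ}

lemma rescaleAt_of_mem_tail (hP : RFDrescalePartition cf d T s0 xs a b P) (hq : q ∈ P.tail) :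
    RFDrescaleAt cf d T s0 xs (q.1 - 1) := by
  obtain ⟨q', hq', hlt, hsucc⟩ := hP.1.exists_pred_of_mem_tail q hq
  rw [← hsucc]
  exact hP.2.2 q' hq' hlt

lemma codeLen_sub_le_of_mem (hP : RFDrescalePartition cf d T s0 xs a b P) (hd : 1 ≤ d)
    (hs0 : ∀ x, 1 ≤ s0 x) (ha : 1 ≤ a) (hp0 : ∀ x, 0 ≤ p x) (hp1 : ∑ x, p x ≤ 1)
    (hp : ∀ k ∈ Icc a b, p (xs (k - 1)) ≠ 0) (hq : q ∈ P)
    {A : ℝ} (hA : 0 ≤ A) (htotal : RFDtotal cf d T s0 xs (q.1 - 1) ≤ (A + 1) * d) :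
    RFDcodeLen cf d T s0 xs q.1 q.2 - distCodeLen p xs q.1 q.2 ≤
      segmentRedundancy N d A (q.2 - q.1 + 1 : ℕ) := by
  obtain ⟨haq, hq12, hqb⟩ := hP.1.mem_bounds q hq
  exact RFDcodeLen_sub_distCodeLen_le_of_not_rescaleAt hd hs0 hp0 hp1 (ha.trans haq) hq12
    (hP.2.1 q hq) (fun k hk => hp k (Icc_subset_Icc haq hqb hk)) hA htotal

lemma codeLen_sub_eq_sum (hP : RFDrescalePartition cf d T s0 xs a b P) :
    RFDcodeLen cf d T s0 xs a b - distCodeLen p xs a b =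
      (P.map fun q => RFDcodeLen cf d T s0 xs q.1 q.2 - distCodeLen p xs q.1 q.2).sum := by
  simp only [RFDcodeLen_sub_distCodeLen, sum_div]
  exact hP.1.sum_Icc _

end RFDrescalePartition

end Algorithm

section Redundancy

variable {N d T : ℕ} {cf L A : ℝ}

lemma one_le_one_sub_mul_of_le (hd : 1 ≤ d) (hT : (d : ℝ) ≤ (1 - cf) * (T - N))
    (hL : L = (T - N) / d) : 1 ≤ (1 - cf) * L := by
  rwa [hL, ← mul_div_assoc, one_le_div (by exact_mod_cast hd)]

lemma redundancyExponent_nonneg (hd : 1 ≤ d) (hc0 : 0 ≤ cf) (hc1 : cf < 1)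
    (hT : (d : ℝ) ≤ (1 - cf) * (T - N)) (hL : L = (T - N) / d) (hA : A = N / d + cf * L) :
    0 ≤ A := by
  have hL0 : 0 < L := pos_of_mul_pos_right
    (one_pos.trans_le (one_le_one_sub_mul_of_le hd hT hL)) (sub_nonneg.2 hc1.le)
  rw [hA]
  positivity

theorem stmt12_general {s0 : Fin N → ℕ} {xs : ℕ → Fin N}
    (hd : 1 ≤ d) (hc0 : 0 ≤ cf) (hc1 : cf < 1) (hT : (d : ℝ) ≤ (1 - cf) * (T - N))
    (hs0 : ∀ x, 1 ≤ s0 x) (hsum : ∑ x, s0 x ≤ T) {a b : ℕ} (ha : 1 ≤ a)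
    {RI : List (ℕ × ℕ)} (hRI : RFDrescalePartition cf d T s0 xs a b RI)
    {q : ℕ × ℕ} (hq : RI.head? = some q) (hL : L = (T - N) / d) (hA : A = N / d + cf * L)
    {p : Fin N → ℝ} (hp0 : ∀ x, 0 ≤ p x) (hp1 : ∑ x, p x ≤ 1)
    (hp : ∀ k ∈ Icc a b, p (xs (k - 1)) ≠ 0) :
    RFDcodeLen cf d T s0 xs a b - distCodeLen p xs a b ≤
      RI.length * segmentRedundancy N d A ((b - a + 1 : ℕ) / RI.length) +
        ((1 - cf) * L - 1) * Real.logb 2 (Real.exp 1 * (q.2 - q.1 + 1 : ℕ)) := by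
  obtain ⟨l, rfl⟩ := List.head?_eq_some_iff.1 hq
  have hd0 : (d : ℝ) ≠ 0 := by positivity
  have hC := one_le_one_sub_mul_of_le hd hT hL
  have hA0 := redundancyExponent_nonneg hd hc0 hc1 hT hL hA
  have hLd : L * d = T - N := by rw [hL, div_mul_cancel₀ _ hd0]
  have hAd : A * d = N + cf * (T - N) := by
    rw [hA, ← hLd]
    field_simp
  have first_segment : RFDcodeLen cf d T s0 xs q.1 q.2 - distCodeLen p xs q.1 q.2 ≤
      segmentRedundancy N d A (q.2 - q.1 + 1 : ℕ) +
        ((1 - cf) * L - 1) * Real.logb 2 (Real.exp 1 * (q.2 - q.1 + 1 : ℕ)) := by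
    have htotal : (RFDtotal cf d T s0 xs (q.1 - 1) : ℝ) ≤ T := by
      exact_mod_cast RFDtotal_le hc0 hc1.le hT hs0 hsum (q.1 - 1)
    rw [← segmentRedundancy_add _ _ _ _ (by positivity)]
    refine hRI.codeLen_sub_le_of_mem hd hs0 ha hp0 hp1 hp List.mem_cons_self (by linarith) ?_
    linear_combination htotal - hAd - (1 - cf) * hLd
  have later_segment (s : ℕ × ℕ) (hs : s ∈ l) :
      RFDcodeLen cf d T s0 xs s.1 s.2 - distCodeLen p xs s.1 s.2 ≤
        segmentRedundancy N d A (s.2 - s.1 + 1 : ℕ) := by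
    have htotal := RFDtotal_le_of_rescaleAt hc0 hc1.le hT hs0 hsum (hRI.rescaleAt_of_mem_tail hs)
    exact hRI.codeLen_sub_le_of_mem hd hs0 ha hp0 hp1 hp (List.mem_cons_of_mem q hs) hA0
      (by linarith)
  have jensen := hRI.1.sum_map_length_le_of_concaveOn (concaveOn_segmentRedundancy N d hA0)
  have sum_later := List.sum_le_sum later_segment
  rw [hRI.codeLen_sub_eq_sum]
  rw [List.map_cons, List.sum_cons] at jensen ⊢
  linarith

end Redundancy

/-- Lemma 7: with `A = N/d + c·L`, `L = (T-N)/d` and `r` as above, for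
any realization of Algorithm RFD, any interval `I = [a,b] ⊆ [1,n]` with induced rescale
partition `R_I` (first segment length `m`), and any probability distribution `p` on `X`:
`ℓ(x_a^b; RFD) - ℓ(x_a^b; p) ≤ |R_I|·r(|I|/|R_I|) + (1-c)·L·log₂(e·m) + log₂((1-c)·L)`.
If `p` assigns probability `0` to an occurring letter the claim is trivial
(first disjunct, code length `+∞`). -/
theorem stmt12 (N d T : ℕ) (cf : ℝ) (hN : 1 < N)
    (s0 : Fin N → ℕ) (xs : ℕ → Fin N)
    (hd : 1 ≤ d) (hc0 : 0 ≤ cf) (hc1 : cf < 1)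
    (hT : (d : ℝ) ≤ (1 - cf) * ((T : ℝ) - N))
    (hs0 : ∀ x, 1 ≤ s0 x) (hsum : ∑ x, s0 x ≤ T)
    (n a b : ℕ) (ha : 1 ≤ a) (hab : a ≤ b) (hbn : b ≤ n)
    (RI : List (ℕ × ℕ)) (hRI : RFDrescalePartition cf d T s0 xs a b RI)
    (q : ℕ × ℕ) (hq : RI.head? = some q)
    (L : ℝ) (hL : L = ((T : ℝ) - N) / d)
    (A : ℝ) (hA : A = (N : ℝ) / d + cf * L)
    (p : Fin N → ℝ) (hp0 : ∀ x, 0 ≤ p x) (hp1 : ∑ x, p x = 1) :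
    (∃ k ∈ Finset.Icc a b, p (xs (k - 1)) = 0) ∨
      RFDcodeLen cf d T s0 xs a b - distCodeLen p xs a b ≤
        (RI.length : ℝ) * rBound N d A (((b - a + 1 : ℕ) : ℝ) / (RI.length : ℝ))
        + (1 - cf) * L * Real.logb 2 (Real.exp 1 * ((q.2 - q.1 + 1 : ℕ) : ℝ))
        + Real.logb 2 ((1 - cf) * L) := by
  exact or_iff_not_imp_left.2 fun hp => (stmt12_general hd hc0 hc1 hT hs0 hsum ha hRI hq hL hA
    hp0 hp1.le fun k hk hk0 => hp ⟨k, hk, hk0⟩).trans (mul_segmentRedundancy_add_le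
      (redundancyExponent_nonneg hd hc0 hc1 hT hL hA) (one_le_one_sub_mul_of_le hd hT hL)
      (Nat.le_add_left _ _) _)
end
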